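/- arXiv:1606.04850 — 2 statements merged into one kernel-verified Lean document; each statement's English description precedes it below -/
import Mathlib

section
/- The series ∑_{n=1}^∞ ζ(2n)/(n(2n+1)(n+1)(n+2)·4^n) equals 2ζ(3)/π² + 31ζ(5)/(4π⁴) + (1/2)·log π - 7/8. -/
open Real

/-!
Since `-log (sin (πx) / (πx)) = ∑ ζ(2N) x^(2N) / N`, integrating against a cubic `w` whose even
moments on `[0, 1/2]` are `1 / (2 (2N+1) (N+1) (N+2) 4^N)` turns half the series into the integral
of `(log π + log x - log (sin (πx))) w(x)` over `[0, 1/2]`. The part with `log x` is elementary.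
For the other one, `w` is a combination of `1`, `B₂(x)`, `B₄(x)` and `B₄(2x)`. The cosine series of
`B₂ₖ` has coefficients proportional to `n^(-2k)`, while the `n`-th cosine coefficient of
`log (sin (πx))` is proportional to `1/n`, so each Bernoulli polynomial contributes a rational
multiple of `ζ(2k+1) / π^(2k)`.
-/

open Filter MeasureTheory Polynomial.Chebyshev
open scoped Interval Topology Nat

lemma hasSum_intervalIntegral_mul_of_norm_le {ι A : Type*} [Countable ι] [NormedRing A]
    [NormedAlgebra ℝ A] {μ : Measure ℝ} {a b : ℝ} {g f : ℝ → A} {F : ι → ℝ → A} {c : ι → ℝ}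
    (hg : IntervalIntegrable g μ a b)
    (hF : ∀ i, AEStronglyMeasurable (F i) (μ.restrict (Ι a b)))
    (hFc : ∀ i, ∀ x ∈ Ι a b, ‖F i x‖ ≤ c i) (hc : Summable c)
    (hf : ∀ x ∈ Ι a b, HasSum (fun i => F i x) (f x)) :
    HasSum (fun i => ∫ x in a..b, g x * F i x ∂μ) (∫ x in a..b, g x * f x ∂μ) := by
  refine intervalIntegral.hasSum_integral_of_dominated_convergence (fun i x => ‖g x‖ * c i)
    (fun i => hg.aestronglyMeasurable_restrict_uIoc.mul (hF i))
    (fun i => .of_forall fun x hx => ?_) (.of_forall fun x _ => hc.mul_left _) ?_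
    (.of_forall fun x hx => (hf x hx).mul_left _)
  · exact (norm_mul_le _ _).trans (mul_le_mul_of_nonneg_left (hFc i x hx) (norm_nonneg _))
  · simp only [tsum_mul_left]
    exact hg.norm.mul_const _

lemma hasSum_cols_of_hasSum_rows_of_nonneg {ι κ : Type*} {f : ι → κ → ℝ} {r : ι → ℝ} {c : κ → ℝ}
    {s : ℝ} (hf : ∀ i j, 0 ≤ f i j) (hr : ∀ i, HasSum (f i) (r i))
    (hc : ∀ j, HasSum (fun i => f i j) (c j)) (hs : HasSum r s) : HasSum c s := by
  have hsummable : Summable fun p : ι × κ => f p.1 p.2 :=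
    (summable_prod_of_nonneg fun p => hf p.1 p.2).2
      ⟨fun i => (hr i).summable, hs.summable.congr fun i => (hr i).tsum_eq.symm⟩
  have hsum : HasSum (fun p : ι × κ => f p.1 p.2) s := by
    rw [hs.unique (hsummable.hasSum.prod_fiberwise hr)]
    exact hsummable.hasSum
  exact ((Equiv.prodComm κ ι).hasSum_iff.2 hsum).prod_fiberwise hc

lemma hasDerivAt_pow_mul_mul_log_sub (m : ℕ) {x : ℝ} (hx : x ≠ 0) :
    HasDerivAt (fun x => x ^ m * (x * log x) / (m + 1) - x ^ (m + 1) / (m + 1) ^ 2)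
      (x ^ m * log x) x := by
  have hm : (m : ℝ) + 1 ≠ 0 := by positivity
  have hpow := hasDerivAt_pow (m + 1) x
  have h := ((hpow.mul (hasDerivAt_log hx)).div_const ((m : ℝ) + 1)).sub
    (hpow.div_const (((m : ℝ) + 1) ^ 2))
  convert! h using 1
  · ext y
    simp only [Pi.sub_apply, Pi.mul_apply]
    ring
  · push_cast
    field_simp
    ring_nf

lemma integral_pow_mul_log (m : ℕ) (b : ℝ) :
    ∫ x in (0 : ℝ)..b, x ^ m * log x =
      b ^ (m + 1) * (log b / (m + 1) - 1 / (m + 1) ^ 2) := by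
  have hcont : Continuous fun x : ℝ =>
      x ^ m * (x * log x) / (m + 1) - x ^ (m + 1) / (m + 1) ^ 2 := by
    have := continuous_mul_log
    fun_prop
  have hne : ∀ x ∈ Set.Ioo (min 0 b) (max 0 b), x ≠ 0 := by
    rintro x hx rfl
    rcases le_total 0 b with h | h <;> simp [h] at hx
  rw [intervalIntegral.integral_eq_sub_of_hasDeriv_right hcont.continuousOn
    (fun x hx => (hasDerivAt_pow_mul_mul_log_sub m (hne x hx)).hasDerivWithinAt)
    (intervalIntegral.intervalIntegrable_log'.continuousOn_mul (by fun_prop))]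
  simp only [zero_mul, mul_zero, zero_pow m.succ_ne_zero, zero_div, sub_zero]
  ring

lemma integral_cos_two_mul_nat_mul {k : ℕ} (hk : k ≠ 0) :
    ∫ θ in (0 : ℝ)..π / 2, cos (2 * k * θ) = 0 := by
  have hk2 : 2 * (k : ℝ) ≠ 0 := by positivity
  rw [intervalIntegral.integral_comp_mul_left cos hk2, integral_cos,
    show 2 * (k : ℝ) * (π / 2) = k * π by ring, sin_nat_mul_pi]
  simp

lemma integral_eval_U_even_cos (k : ℕ) :
    ∫ θ in (0 : ℝ)..π / 2, (U ℝ (2 * k)).eval (cos θ) = π / 2 := by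
  induction k with
  | zero => simp
  | succ k ih =>
    have hrec (θ : ℝ) : (U ℝ (2 * (k + 1 : ℕ))).eval (cos θ) =
        2 * cos (2 * (k + 1 : ℕ) * θ) + (U ℝ (2 * k)).eval (cos θ) := by
      have hT := T_real_cos θ (2 * (k + 1 : ℕ))
      push_cast at hT ⊢
      rw [mul_add, mul_one, U_eq_two_mul_T_add_U, ← hT]
      simp [mul_add]
    simp only [hrec]
    rw [intervalIntegral.integral_add, intervalIntegral.integral_const_mul,
      integral_cos_two_mul_nat_mul k.succ_ne_zero, ih, mul_zero, zero_add]
    all_goals exact Continuous.intervalIntegrable (by fun_prop) _ _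

lemma integral_cos_mul_eval_U_odd_cos {k : ℕ} (hk : k ≠ 0) :
    ∫ θ in (0 : ℝ)..π / 2, cos θ * (U ℝ (2 * k - 1)).eval (cos θ) = π / 2 := by
  have hcos (θ : ℝ) : cos θ * (U ℝ (2 * k - 1)).eval (cos θ) =
      (U ℝ (2 * k)).eval (cos θ) - cos (2 * k * θ) := by
    have hT := T_real_cos θ (2 * k)
    rw [T_eq_U_sub_X_mul_U] at hT
    simp only [Polynomial.eval_sub, Polynomial.eval_mul, Polynomial.eval_X, Int.cast_mul,
      Int.cast_ofNat, Int.cast_natCast] at hT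
    linarith
  simp only [hcos]
  rw [intervalIntegral.integral_sub, integral_eval_U_even_cos, integral_cos_two_mul_nat_mul hk,
    sub_zero]
  all_goals exact Continuous.intervalIntegrable (by fun_prop) _ _

lemma eval_U_odd_cos_mul_sin (k : ℕ) (θ : ℝ) :
    (U ℝ (2 * k - 1)).eval (cos θ) * sin θ = sin (2 * k * θ) := by
  rw [U_real_cos]
  push_cast
  ring_nf

-- Factoring `sin (2kθ)` through `sin θ` makes the antiderivative visibly continuous at `θ = 0`.
lemma hasDerivAt_sin_mul_log_sin_mul_eval_U (k : ℕ) {θ : ℝ} (hθ : sin θ ≠ 0) :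
    HasDerivAt (fun t => sin t * log (sin t) * (U ℝ (2 * k - 1)).eval (cos t))
      (2 * k * (log (sin θ) * cos (2 * k * θ)) + cos θ * (U ℝ (2 * k - 1)).eval (cos θ)) θ := by
  have hfun : (fun t => sin t * log (sin t) * (U ℝ (2 * k - 1)).eval (cos t)) =
      fun t => log (sin t) * sin (2 * k * t) := by
    funext t
    rw [← eval_U_odd_cos_mul_sin]
    ring
  have hlog := (hasDerivAt_sin θ).log hθ
  have hsin : HasDerivAt (fun t => sin (2 * k * t)) (cos (2 * k * θ) * (2 * k)) θ := by
    simpa using ((hasDerivAt_id θ).const_mul (2 * (k : ℝ))).sin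
  rw [hfun]
  refine (hlog.mul hsin).congr_deriv ?_
  rw [← eval_U_odd_cos_mul_sin]
  field_simp
  ring

lemma integral_log_sin_mul_cos_two_mul {k : ℕ} (hk : k ≠ 0) :
    ∫ θ in (0 : ℝ)..π / 2, log (sin θ) * cos (2 * k * θ) = -π / (4 * k) := by
  have hcont : Continuous fun t =>
      sin t * log (sin t) * (U ℝ (2 * k - 1)).eval (cos t) := by
    have := continuous_mul_log.comp continuous_sin
    simp only [Function.comp_def] at this
    fun_prop
  have hint₁ : IntervalIntegrable (fun θ => 2 * k * (log (sin θ) * cos (2 * k * θ)))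
      volume 0 (π / 2) :=
    (intervalIntegrable_log_sin.mul_continuousOn (by fun_prop)).const_mul _
  have hint₂ : IntervalIntegrable (fun θ => cos θ * (U ℝ (2 * k - 1)).eval (cos θ))
      volume 0 (π / 2) :=
    Continuous.intervalIntegrable (by fun_prop) _ _
  have h := intervalIntegral.integral_eq_sub_of_hasDerivAt_of_le (by positivity)
    hcont.continuousOn
    (fun θ hθ => hasDerivAt_sin_mul_log_sin_mul_eval_U k
      (sin_pos_of_pos_of_lt_pi hθ.1 (by linarith [hθ.2, pi_pos])).ne')
    (hint₁.add hint₂)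
  rw [intervalIntegral.integral_add hint₁ hint₂, intervalIntegral.integral_const_mul,
    integral_cos_mul_eval_U_odd_cos hk] at h
  simp only [sin_pi_div_two, log_one, sin_zero, zero_mul, mul_zero, sub_zero] at h
  have hk' : (k : ℝ) ≠ 0 := by exact_mod_cast hk
  rw [eq_div_iff (mul_ne_zero four_ne_zero hk')]
  linarith

lemma integral_comp_pi_mul (f : ℝ → ℝ) :
    ∫ x in (0 : ℝ)..1 / 2, f (π * x) = (∫ θ in (0 : ℝ)..π / 2, f θ) / π := by
  rw [intervalIntegral.integral_comp_mul_left f pi_ne_zero, mul_zero, mul_one_div, smul_eq_mul,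
    inv_mul_eq_div]

lemma integral_log_sin_pi_mul_mul_cos {n : ℕ} (hn : n ≠ 0) :
    ∫ x in (0 : ℝ)..1 / 2, log (sin (π * x)) * cos (2 * π * n * x) = -1 / (4 * n) := by
  have h := integral_comp_pi_mul fun θ => log (sin θ) * cos (2 * n * θ)
  rw [integral_log_sin_mul_cos_two_mul hn] at h
  calc ∫ x in (0 : ℝ)..1 / 2, log (sin (π * x)) * cos (2 * π * n * x)
      = ∫ x in (0 : ℝ)..1 / 2, log (sin (π * x)) * cos (2 * n * (π * x)) := by
        simp only [mul_comm, mul_left_comm, mul_assoc]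
    _ = -1 / (4 * n) := by rw [h, div_right_comm, neg_div, div_self pi_ne_zero]

lemma integral_log_sin_pi_mul : ∫ x in (0 : ℝ)..1 / 2, log (sin (π * x)) = -log 2 / 2 := by
  rw [integral_comp_pi_mul fun θ => log (sin θ), integral_log_sin_zero_pi_div_two]
  field_simp

lemma intervalIntegrable_log_sin_pi_mul (a b : ℝ) :
    IntervalIntegrable (fun x => log (sin (π * x))) volume a b := by
  simpa [mul_div_cancel_left₀ _ pi_ne_zero] using
    (intervalIntegrable_log_sin (a := π * a) (b := π * b)).comp_mul_left (c := π)

/-- The real value `ζ(k)` of the Riemann zeta function at a natural number `k ≥ 2`. The term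
`n = 0` of the series vanishes because `1 / 0 = 0`. -/
noncomputable def realZeta (k : ℕ) : ℝ := ∑' n : ℕ, 1 / (n : ℝ) ^ k

lemma hasSum_realZeta {k : ℕ} (hk : 1 < k) :
    HasSum (fun n : ℕ => 1 / (n : ℝ) ^ k) (realZeta k) :=
  (summable_one_div_nat_pow.2 hk).hasSum

lemma hasSum_realZeta_succ {k : ℕ} (hk : 1 < k) :
    HasSum (fun n : ℕ => 1 / ((n : ℝ) + 1) ^ k) (realZeta k) := by
  simpa [zero_pow (by omega : k ≠ 0)] using (hasSum_nat_add_iff' 1).2 (hasSum_realZeta hk)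

lemma realZeta_nonneg (k : ℕ) : 0 ≤ realZeta k := tsum_nonneg fun _ => by positivity

lemma riemannZeta_natCast_eq_realZeta {k : ℕ} (hk : 1 < k) : riemannZeta k = realZeta k := by
  rw [zeta_nat_eq_tsum_of_gt_one hk, realZeta]
  push_cast
  rfl

lemma bernoulliFun_four (x : ℝ) : bernoulliFun 4 x = x ^ 4 - 2 * x ^ 3 + x ^ 2 - 1 / 30 := by
  simp [bernoulliFun, Polynomial.bernoulli_def, Finset.sum_range_succ, bernoulli,
    bernoulli'_two, bernoulli'_three, bernoulli'_four, Nat.choose]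
  ring

lemma hasSum_integral_log_sin_mul_bernoulliFun_comp_mul {k m : ℕ} (hk : k ≠ 0) (hm : m ≠ 0)
    (hm2 : m ≤ 2) :
    HasSum (fun n : ℕ => -1 / (4 * m) * (1 / (n : ℝ) ^ (2 * k + 1)))
      ((-1) ^ (k + 1) * (2 * π) ^ (2 * k) / 2 / (2 * k)! *
        ∫ x in (0 : ℝ)..1 / 2, log (sin (π * x)) * bernoulliFun (2 * k) (m * x)) := by
  have hm2' : (m : ℝ) ≤ 2 := by exact_mod_cast hm2
  have h := hasSum_intervalIntegral_mul_of_norm_le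
    (F := fun (n : ℕ) x => 1 / (n : ℝ) ^ (2 * k) * cos (2 * π * n * (m * x)))
    (f := fun x =>
      (-1) ^ (k + 1) * (2 * π) ^ (2 * k) / 2 / (2 * k)! * bernoulliFun (2 * k) (m * x))
    (intervalIntegrable_log_sin_pi_mul 0 (1 / 2))
    (fun n => Continuous.aestronglyMeasurable (by fun_prop))
    (fun n x _ => ?_) (hasSum_realZeta (by omega : 1 < 2 * k)).summable (fun x hx => ?_)
  · simp only [mul_left_comm (log _), intervalIntegral.integral_const_mul] at h
    convert! h using 2 with n
    rcases eq_or_ne n 0 with rfl | hn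
    · simp [hk]
    · have hcoeff := integral_log_sin_pi_mul_mul_cos (mul_ne_zero hm hn)
      have hfreq (x : ℝ) : 2 * π * n * (m * x) = 2 * π * (m * n : ℕ) * x := by
        push_cast
        ring
      simp only [hfreq, hcoeff, pow_succ]
      push_cast
      field_simp
  · rw [norm_mul, norm_of_nonneg (by positivity)]
    exact mul_le_of_le_one_right (by positivity) (abs_cos_le_one _)
  · rw [Set.uIoc_of_le (by norm_num)] at hx
    have hx0 := hx.1.le
    exact hasSum_one_div_nat_pow_mul_cos hk ⟨by positivity, by nlinarith [hx.2]⟩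

lemma integral_log_sin_mul_bernoulliFun_comp_mul {k m : ℕ} (hk : k ≠ 0) (hm : m ≠ 0)
    (hm2 : m ≤ 2) :
    ∫ x in (0 : ℝ)..1 / 2, log (sin (π * x)) * bernoulliFun (2 * k) (m * x) =
      (-1) ^ k * (2 * k)! / (2 * m * (2 * π) ^ (2 * k)) * realZeta (2 * k + 1) := by
  have h := (hasSum_integral_log_sin_mul_bernoulliFun_comp_mul hk hm hm2).unique
    ((hasSum_realZeta (by omega : 1 < 2 * k + 1)).mul_left _)
  generalize ∫ x in (0 : ℝ)..1 / 2, log (sin (π * x)) * bernoulliFun (2 * k) (m * x) = I at h ⊢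
  have hm' : (m : ℝ) ≠ 0 := by exact_mod_cast hm
  rcases neg_one_pow_eq_or ℝ k with hsign | hsign <;>
  · rw [pow_succ, hsign] at h
    rw [hsign]
    field_simp at h ⊢
    linarith

lemma tendsto_prod_one_sub_sq_div (x : ℝ) :
    Tendsto (fun n : ℕ => ∏ j ∈ Finset.range n, (1 - x ^ 2 / ((j : ℝ) + 1) ^ 2)) atTop
      (𝓝 (sinc (π * x))) := by
  rcases eq_or_ne x 0 with rfl | hx
  · simp
  · have hpx : π * x ≠ 0 := mul_ne_zero pi_ne_zero hx
    rw [sinc_of_ne_zero hpx]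
    refine ((tendsto_euler_sin_prod x).div_const (π * x)).congr fun n => ?_
    rw [mul_div_cancel_left₀ _ hpx]

lemma sinc_pos_of_abs_lt_pi {x : ℝ} (hx : |x| < π) : 0 < sinc x := by
  rcases eq_or_ne x 0 with rfl | hx0
  · simp
  · have habs : sinc |x| = sinc x := by rcases abs_choice x with h | h <;> simp [h]
    rw [← habs, sinc_of_ne_zero (abs_ne_zero.2 hx0)]
    exact div_pos (sin_pos_of_pos_of_lt_pi (abs_pos.2 hx0) hx) (abs_pos.2 hx0)

lemma sq_div_succ_sq_lt_one {x : ℝ} (hx : |x| < 1) (j : ℕ) : x ^ 2 / ((j : ℝ) + 1) ^ 2 < 1 := by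
  rw [div_lt_one (by positivity)]
  exact (sq_lt_one_iff_abs_lt_one x |>.2 hx).trans_le (one_le_pow₀ (by simp))

lemma hasSum_neg_log_one_sub_sq_div {x : ℝ} (hx : |x| < 1) :
    HasSum (fun j : ℕ => -log (1 - x ^ 2 / ((j : ℝ) + 1) ^ 2)) (-log (sinc (π * x))) := by
  have hpos (j : ℕ) : 0 < 1 - x ^ 2 / ((j : ℝ) + 1) ^ 2 := sub_pos.2 (sq_div_succ_sq_lt_one hx j)
  have hle (j : ℕ) : 1 - x ^ 2 / ((j : ℝ) + 1) ^ 2 ≤ 1 := sub_le_self _ (by positivity)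
  have hsinc : 0 < sinc (π * x) := sinc_pos_of_abs_lt_pi <| by
    rw [abs_mul, abs_of_pos pi_pos]
    exact mul_lt_of_lt_one_right pi_pos hx
  rw [hasSum_iff_tendsto_nat_of_nonneg fun j =>
    neg_nonneg.2 (log_nonpos (hpos j).le (hle j))]
  refine ((tendsto_prod_one_sub_sq_div x).log hsinc.ne').neg.congr fun n => ?_
  rw [log_prod fun j _ => (hpos j).ne', Finset.sum_neg_distrib]

lemma hasSum_realZeta_mul_pow_neg_log_sinc {x : ℝ} (hx : |x| < 1) :
    HasSum (fun n : ℕ => realZeta (2 * (n + 1)) / (n + 1) * x ^ (2 * (n + 1)))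
      (-log (sinc (π * x))) := by
  refine hasSum_cols_of_hasSum_rows_of_nonneg
    (f := fun j n : ℕ => (x ^ 2 / ((j : ℝ) + 1) ^ 2) ^ (n + 1) / ((n : ℝ) + 1))
    (fun j n => by positivity) (fun j => hasSum_pow_div_log_of_abs_lt_one ?_) (fun n => ?_)
    (hasSum_neg_log_one_sub_sq_div hx)
  · rw [abs_of_nonneg (by positivity)]
    exact sq_div_succ_sq_lt_one hx j
  · have hterm (j : ℕ) : (x ^ 2 / ((j : ℝ) + 1) ^ 2) ^ (n + 1) / ((n : ℝ) + 1) =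
        x ^ (2 * (n + 1)) / (n + 1) * (1 / ((j : ℝ) + 1) ^ (2 * (n + 1))) := by
      rw [div_pow, ← pow_mul, ← pow_mul]
      ring
    rw [div_mul_comm]
    exact ((hasSum_realZeta_succ (by omega)).mul_left _).congr_fun hterm

/-- The cubic weight against which `-log (sinc (πx))` is integrated over `[0, 1/2]`. Its
coefficients are read off the partial fractions of `2 / ((m + 1) (m + 2) (m + 4))`, so that its
moments have this product in the denominator, see `integral_pow_mul_momentWeight`. -/
noncomputable def momentWeight (x : ℝ) : ℝ := 4 / 3 - 4 * x + 16 / 3 * x ^ 3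

@[fun_prop]
lemma continuous_momentWeight : Continuous momentWeight := by
  unfold momentWeight
  fun_prop

lemma integral_mul_momentWeight {g : ℝ → ℝ} {a b : ℝ} (hg : IntervalIntegrable g volume a b) :
    ∫ x in a..b, g x * momentWeight x =
      4 / 3 * (∫ x in a..b, g x) - 4 * (∫ x in a..b, x * g x) +
        16 / 3 * ∫ x in a..b, x ^ 3 * g x := by
  have hexpand (x : ℝ) : g x * momentWeight x =
      4 / 3 * g x - 4 * (x * g x) + 16 / 3 * (x ^ 3 * g x) := by
    rw [momentWeight]
    ring
  have h₁ : IntervalIntegrable (fun x => x * g x) volume a b :=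
    hg.continuousOn_mul (by fun_prop)
  have h₃ : IntervalIntegrable (fun x => x ^ 3 * g x) volume a b :=
    hg.continuousOn_mul (by fun_prop)
  simp only [hexpand]
  rw [intervalIntegral.integral_add ((hg.const_mul _).sub (h₁.const_mul _)) (h₃.const_mul _),
    intervalIntegral.integral_sub (hg.const_mul _) (h₁.const_mul _)]
  simp only [intervalIntegral.integral_const_mul]

lemma integral_pow_mul_momentWeight (m : ℕ) :
    ∫ x in (0 : ℝ)..1 / 2, x ^ m * momentWeight x =
      2 / (2 ^ m * (m + 1) * (m + 2) * (m + 4)) := by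
  rw [integral_mul_momentWeight (Continuous.intervalIntegrable (by fun_prop) _ _)]
  simp only [← pow_succ', ← pow_add, integral_pow]
  push_cast
  simp only [one_div, inv_pow, pow_add]
  field_simp
  ring

lemma integral_log_mul_momentWeight :
    ∫ x in (0 : ℝ)..1 / 2, log x * momentWeight x = -log 2 / 4 - 7 / 16 := by
  rw [integral_mul_momentWeight intervalIntegral.intervalIntegrable_log']
  have h₀ := integral_pow_mul_log 0 (1 / 2)
  have h₁ := integral_pow_mul_log 1 (1 / 2)
  have h₃ := integral_pow_mul_log 3 (1 / 2)
  simp only [pow_zero, one_mul, pow_one] at h₀ h₁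
  rw [h₀, h₁, h₃, one_div, log_inv]
  norm_num
  ring

lemma momentWeight_eq_bernoulliFun (x : ℝ) :
    momentWeight x = 1 / 2 + 4 * bernoulliFun 2 x - 16 / 3 * bernoulliFun 4 x +
      1 / 3 * bernoulliFun 4 (2 * x) := by
  rw [momentWeight, bernoulliFun_two, bernoulliFun_four, bernoulliFun_four]
  ring

lemma integral_log_sin_mul_momentWeight :
    ∫ x in (0 : ℝ)..1 / 2, log (sin (π * x)) * momentWeight x =
      -log 2 / 4 - realZeta 3 / π ^ 2 - 31 * realZeta 5 / (8 * π ^ 4) := by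
  have hlog := intervalIntegrable_log_sin_pi_mul 0 (1 / 2)
  have hint (k : ℕ) (c : ℝ) : IntervalIntegrable
      (fun x => log (sin (π * x)) * bernoulliFun k (c * x)) volume 0 (1 / 2) :=
    hlog.mul_continuousOn <|
      ((continuous_bernoulliFun k).comp (continuous_const_mul c)).continuousOn
  have hexpand (x : ℝ) : log (sin (π * x)) * momentWeight x =
      1 / 2 * log (sin (π * x)) + 4 * (log (sin (π * x)) * bernoulliFun 2 (1 * x)) -
        16 / 3 * (log (sin (π * x)) * bernoulliFun 4 (1 * x)) +
        1 / 3 * (log (sin (π * x)) * bernoulliFun 4 (2 * x)) := by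
    rw [momentWeight_eq_bernoulliFun, one_mul]
    ring
  have hB₂ := integral_log_sin_mul_bernoulliFun_comp_mul one_ne_zero one_ne_zero one_le_two
  have hB₄ := integral_log_sin_mul_bernoulliFun_comp_mul two_ne_zero one_ne_zero one_le_two
  have hB₄' := integral_log_sin_mul_bernoulliFun_comp_mul two_ne_zero two_ne_zero le_rfl
  norm_num [Nat.factorial, -bernoulliFun_two] at hB₂ hB₄ hB₄'
  simp only [hexpand]
  rw [intervalIntegral.integral_add (.sub (.add (hlog.const_mul _) ((hint 2 1).const_mul _))
      ((hint 4 1).const_mul _)) ((hint 4 2).const_mul _),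
    intervalIntegral.integral_sub (.add (hlog.const_mul _) ((hint 2 1).const_mul _))
      ((hint 4 1).const_mul _),
    intervalIntegral.integral_add (hlog.const_mul _) ((hint 2 1).const_mul _)]
  simp only [intervalIntegral.integral_const_mul, integral_log_sin_pi_mul, one_mul, hB₂, hB₄,
    hB₄']
  ring

lemma neg_log_sinc_pi_mul {x : ℝ} (hx₀ : 0 < x) (hx₁ : x < 1) :
    -log (sinc (π * x)) = log π + log x - log (sin (π * x)) := by
  have hsin : 0 < sin (π * x) :=
    sin_pos_of_pos_of_lt_pi (by positivity) (mul_lt_of_lt_one_right pi_pos hx₁)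
  rw [sinc_of_ne_zero (by positivity), log_div hsin.ne' (by positivity),
    log_mul pi_ne_zero hx₀.ne']
  ring

lemma integral_neg_log_sinc_mul_momentWeight :
    ∫ x in (0 : ℝ)..1 / 2, -log (sinc (π * x)) * momentWeight x =
      realZeta 3 / π ^ 2 + 31 * realZeta 5 / (8 * π ^ 4) + log π / 4 - 7 / 16 := by
  have hconst : IntervalIntegrable (fun x => log π * momentWeight x) volume 0 (1 / 2) :=
    Continuous.intervalIntegrable (by fun_prop) _ _
  have hlog : IntervalIntegrable (fun x => log x * momentWeight x) volume 0 (1 / 2) :=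
    intervalIntegral.intervalIntegrable_log'.mul_continuousOn (by fun_prop)
  have hsin : IntervalIntegrable (fun x => log (sin (π * x)) * momentWeight x) volume 0 (1 / 2) :=
    (intervalIntegrable_log_sin_pi_mul _ _).mul_continuousOn (by fun_prop)
  have hmass := integral_pow_mul_momentWeight 0
  simp only [pow_zero, one_mul] at hmass
  calc ∫ x in (0 : ℝ)..1 / 2, -log (sinc (π * x)) * momentWeight x
      = ∫ x in (0 : ℝ)..1 / 2,
          (log π * momentWeight x + log x * momentWeight x -
            log (sin (π * x)) * momentWeight x) := by
        refine intervalIntegral.integral_congr_ae (.of_forall fun x hx => ?_)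
        rw [Set.uIoc_of_le (by norm_num)] at hx
        rw [neg_log_sinc_pi_mul hx.1 (by linarith [hx.2])]
        ring
    _ = realZeta 3 / π ^ 2 + 31 * realZeta 5 / (8 * π ^ 4) + log π / 4 - 7 / 16 := by
        rw [intervalIntegral.integral_sub (hconst.add hlog) hsin,
          intervalIntegral.integral_add hconst hlog, intervalIntegral.integral_const_mul, hmass,
          integral_log_mul_momentWeight, integral_log_sin_mul_momentWeight]
        norm_num
        ring

lemma hasSum_realZeta_mul_integral_pow_mul_momentWeight :
    HasSum
      (fun n : ℕ => realZeta (2 * (n + 1)) / (n + 1) *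
        ∫ x in (0 : ℝ)..1 / 2, x ^ (2 * (n + 1)) * momentWeight x)
      (∫ x in (0 : ℝ)..1 / 2, -log (sinc (π * x)) * momentWeight x) := by
  have h := hasSum_intervalIntegral_mul_of_norm_le (μ := volume) (a := 0) (b := 1 / 2)
    (g := momentWeight) (f := fun x => -log (sinc (π * x)))
    (F := fun (n : ℕ) x => realZeta (2 * (n + 1)) / (n + 1) * x ^ (2 * (n + 1)))
    (c := fun n : ℕ => realZeta (2 * (n + 1)) / (n + 1) * (1 / 2) ^ (2 * (n + 1)))
    (continuous_momentWeight.intervalIntegrable _ _)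
    (fun n => Continuous.aestronglyMeasurable (by fun_prop)) (fun n x hx => ?_)
    (hasSum_realZeta_mul_pow_neg_log_sinc (by norm_num [abs_lt])).summable (fun x hx => ?_)
  · convert! h using 1
    · funext n
      rw [← intervalIntegral.integral_const_mul]
      simp only [mul_comm (momentWeight _), mul_assoc]
    · simp only [mul_comm (momentWeight _)]
  all_goals
    rw [Set.uIoc_of_le (by norm_num)] at hx
    have hx₀ := hx.1.le
  · have := realZeta_nonneg (2 * (n + 1))
    rw [norm_of_nonneg (by positivity)]
    gcongr
    exact hx.2
  · exact hasSum_realZeta_mul_pow_neg_log_sinc (by rw [abs_of_nonneg hx₀]; linarith [hx.2])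

lemma hasSum_realZeta_div :
    HasSum
      (fun n : ℕ => realZeta (2 * (n + 1)) /
        ((n + 1) * (2 * n + 3) * (n + 2) * (n + 3) * 4 ^ (n + 1)))
      (2 * realZeta 3 / π ^ 2 + 31 * realZeta 5 / (4 * π ^ 4) + 1 / 2 * log π - 7 / 8) := by
  have h := hasSum_realZeta_mul_integral_pow_mul_momentWeight.mul_left 2
  rw [integral_neg_log_sinc_mul_momentWeight] at h
  convert! h using 1
  · funext n
    rw [integral_pow_mul_momentWeight, pow_mul]
    push_cast
    norm_num
    field_simp
    ring
  · ring

theorem stmt11 :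
    ∑' n : ℕ, riemannZeta (2 * (n + 1)) /
        ((n + 1) * (2 * n + 3) * (n + 2) * (n + 3) * 4 ^ (n + 1)) =
      2 * riemannZeta 3 / (π : ℂ) ^ 2 + 31 * riemannZeta 5 / (4 * (π : ℂ) ^ 4) +
        (1 / 2) * (Real.log π : ℂ) - 7 / 8 := by
  have hzeta₃ : riemannZeta 3 = realZeta 3 := by
    exact_mod_cast riemannZeta_natCast_eq_realZeta (k := 3) (by norm_num)
  have hzeta₅ : riemannZeta 5 = realZeta 5 := by
    exact_mod_cast riemannZeta_natCast_eq_realZeta (k := 5) (by norm_num)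
  have hzeta_even (n : ℕ) : riemannZeta (2 * (n + 1)) = realZeta (2 * (n + 1)) := by
    exact_mod_cast riemannZeta_natCast_eq_realZeta (k := 2 * (n + 1)) (by omega)
  simp only [hzeta₃, hzeta₅, hzeta_even]
  have hsum := (Complex.hasSum_ofReal.2 hasSum_realZeta_div).tsum_eq
  push_cast at hsum
  exact hsum
end

section
/- The series ∑_{n=0}^∞ ζ(2n)/((2n+1)(n+1)·16^n) equals 2G/π - 35ζ(3)/(4π²), where G is Catalan's constant. -/
open Real

noncomputable def catalanConst : ℝ := ∑' n : ℕ, (-1) ^ n / (2 * (n : ℝ) + 1) ^ 2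

/-!
The numbers `ζ(2n)` are the Taylor coefficients of `-(πz/2) cot (πz)`, and
`∫₀¹ (1 - t) t²ⁿ dt = 1 / ((2n + 1)(2n + 2))`, so the series is an integral of `t (1 - t)` against
a cotangent. The cotangent is summed by the conjugate Dirichlet kernel: `∑ sin (kx)` over `k < N`
is `½ cot (x/2)` up to a term oscillating with `N`, which the Riemann–Lebesgue lemma kills. Hence
the integral is a combination of the Clausen-type values `∑ sin (2πrk) / k²` and
`∑ cos (2πrk) / k³`. At `r = 1/4` the former is Catalan's constant, and the duplication formula
reduces the latter to `ζ(3)`.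
-/

open Filter HurwitzZeta MeasureTheory
open scoped Topology

section CotangentSeries

variable {z : ℂ}

lemma mem_integerComplement_of_norm_lt_one (hz₀ : z ≠ 0) (hz : ‖z‖ < 1) :
    z ∈ Complex.integerComplement := by
  rintro ⟨m, rfl⟩
  have hm : |m| < 1 := by
    rw [Complex.norm_intCast] at hz
    exact_mod_cast hz
  exact hz₀ (by rw [Int.abs_lt_one_iff.1 hm, Int.cast_zero])

lemma hasSum_sq_div_sq_sub_sq (hz : z ∈ Complex.integerComplement) :
    HasSum (fun k : ℕ ↦ z ^ 2 / ((k + 1) ^ 2 - z ^ 2))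
      (1 / 2 - π * z / 2 * Complex.cot (π * z)) := by
  have hz₀ : z ≠ 0 := Complex.integerComplement.ne_zero hz
  have h := (summable_cotTerm hz).hasSum.mul_left (-z / 2)
  simp only [cotTerm_identity hz] at h
  convert! h using 1
  · ext k
    rw [show ((k : ℂ) + 1) ^ 2 - z ^ 2 = -((z + (k + 1)) * (z - (k + 1))) by ring, div_neg]
    ring
  · rw [← tsum_congr (cotTerm_identity hz), ← cot_series_rep' hz]
    field_simp
    ring

lemma hasSum_one_div_add_one_pow {m : ℕ} (hm : 1 < m) :
    HasSum (fun k : ℕ ↦ 1 / ((k : ℂ) + 1) ^ m) (riemannZeta m) := by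
  have hs : Summable fun k : ℕ ↦ 1 / ((k : ℂ) + 1) ^ m := by
    have hreal := (summable_nat_add_iff 1).2 (Real.summable_one_div_nat_pow.2 hm)
    simpa using (Complex.hasSum_ofReal.2 hreal.hasSum).summable
  convert! hs.hasSum using 1
  rw [zeta_eq_tsum_one_div_nat_add_one_cpow (by simpa using hm)]
  simp only [Complex.cpow_natCast]

lemma hasSum_div_add_one_pow (hz : ‖z‖ < 1) (k : ℕ) :
    HasSum (fun n : ℕ ↦ (z / (k + 1)) ^ (2 * (n + 1))) (z ^ 2 / ((k + 1) ^ 2 - z ^ 2)) := by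
  have hq : ‖(z / (k + 1)) ^ 2‖ < 1 := by
    have hle : ‖z / (k + 1)‖ ≤ ‖z‖ := by
      rw [norm_div]
      refine div_le_self (norm_nonneg z) ?_
      rw [← Nat.cast_add_one, Complex.norm_natCast]
      exact_mod_cast Nat.le_add_left 1 k
    rw [norm_pow]
    exact pow_lt_one₀ (norm_nonneg _) (hle.trans_lt hz) two_ne_zero
  convert! (hasSum_geometric_of_norm_lt_one hq).mul_left ((z / (k + 1)) ^ 2) using 1
  · ext n
    ring
  · have hd : ((k : ℂ) + 1) ^ 2 - z ^ 2 = (k + 1) ^ 2 * (1 - (z / (k + 1)) ^ 2) := by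
      field_simp
    rw [hd, ← div_div, ← div_pow, div_eq_mul_inv]

lemma summable_div_add_one_pow (hz : ‖z‖ < 1) :
    Summable fun p : ℕ × ℕ ↦ (z / (p.1 + 1)) ^ (2 * (p.2 + 1)) := by
  have hk : Summable fun k : ℕ ↦ 1 / ((k : ℝ) + 1) ^ 2 := by
    simpa using (summable_nat_add_iff 1).2 (Real.summable_one_div_nat_pow.2 one_lt_two)
  have hn : Summable fun n : ℕ ↦ ‖z‖ ^ (2 * (n + 1)) := by
    refine (summable_geometric_of_lt_one (norm_nonneg z) hz).comp_injective
      (i := fun n ↦ 2 * (n + 1)) fun m n h ↦ ?_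
    simpa using h
  refine .of_norm_bounded
    (hk.mul_of_nonneg hn (fun _ ↦ by positivity) (fun _ ↦ by positivity)) fun p ↦ ?_
  rw [norm_pow, norm_div, div_pow, ← Nat.cast_add_one, Complex.norm_natCast, Nat.cast_add_one,
    one_div_mul_eq_div]
  gcongr
  · simp
  · omega

lemma hasSum_riemannZeta_two_mul_mul_pow (hz₀ : z ≠ 0) (hz : ‖z‖ < 1) :
    HasSum (fun n : ℕ ↦ riemannZeta (2 * n) * z ^ (2 * n))
      (-(π * z / 2 * Complex.cot (π * z))) := by
  have hcot := hasSum_sq_div_sq_sub_sq (mem_integerComplement_of_norm_lt_one hz₀ hz)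
  have hS := (summable_div_add_one_pow hz).hasSum
  rw [(hS.prod_fiberwise (hasSum_div_add_one_pow hz)).unique hcot,
    ← (Equiv.prodComm ℕ ℕ).hasSum_iff] at hS
  rw [← hasSum_nat_add_iff' 1]
  convert! hS.prod_fiberwise fun n ↦ ?_ using 1
  · simp [riemannZeta_zero]
    ring
  · convert! (hasSum_one_div_add_one_pow (m := 2 * (n + 1)) (by omega)).mul_right
      (z ^ (2 * (n + 1))) using 1
    · ext k
      simp only [Function.comp_apply, Equiv.prodComm_apply, Prod.swap_prod_mk, div_pow]
      ring
    · push_cast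
      rfl

end CotangentSeries

lemma integral_one_sub_mul_pow (m : ℕ) :
    ∫ t in (0 : ℝ)..1, (1 - t) * t ^ m = 1 / ((m + 1) * (m + 2)) := by
  have h : ∀ t : ℝ, (1 - t) * t ^ m = t ^ m - t ^ (m + 1) := fun t ↦ by ring
  simp only [h]
  rw [intervalIntegral.integral_sub (by simp) (by simp), integral_pow, integral_pow]
  push_cast
  simp only [one_pow, ne_eq, Nat.succ_ne_zero, not_false_eq_true, zero_pow, sub_zero]
  field_simp
  ring

lemma hasSum_div_of_hasSum_mul_pow {c : ℕ → ℂ} {f : ℝ → ℂ} (hc : Summable c)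
    (hf : ∀ t ∈ Set.Ioc (0 : ℝ) 1, HasSum (fun n ↦ c n * t ^ (2 * n)) (f t)) :
    HasSum (fun n ↦ c n / ((2 * n + 1) * (n + 1))) (2 * ∫ t in (0 : ℝ)..1, (1 - t) * f t) := by
  have hint : HasSum (fun n ↦ ∫ t in (0 : ℝ)..1, (1 - t) * (c n * (t : ℂ) ^ (2 * n)))
      (∫ t in (0 : ℝ)..1, (1 - t) * f t) := by
    refine intervalIntegral.hasSum_integral_of_dominated_convergence (fun n _ ↦ ‖c n‖)
      (fun n ↦ Continuous.aestronglyMeasurable (by fun_prop)) (fun n ↦ ae_of_all _ fun t ht ↦ ?_)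
      (ae_of_all _ fun _ _ ↦ hc.norm) intervalIntegrable_const (ae_of_all _ fun t ht ↦ ?_)
    all_goals rw [Set.uIoc_of_le zero_le_one] at ht
    · have h₁ : ‖1 - (t : ℂ)‖ ≤ 1 := by
        rw [← Complex.ofReal_one, ← Complex.ofReal_sub, Complex.norm_real, Real.norm_eq_abs, abs_le]
        constructor <;> linarith [ht.1, ht.2]
      have h₂ : ‖(t : ℂ) ^ (2 * n)‖ ≤ 1 := by
        rw [norm_pow, Complex.norm_real, Real.norm_of_nonneg ht.1.le]
        exact pow_le_one₀ ht.1.le ht.2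
      rw [norm_mul, norm_mul]
      exact (mul_le_of_le_one_left (by positivity) h₁).trans
        (mul_le_of_le_one_right (norm_nonneg _) h₂)
    · exact (hf t ht).mul_left _
  convert! hint.mul_left 2 using 2 with n
  have hreal : ∀ t : ℝ,
      (1 - (t : ℂ)) * (c n * (t : ℂ) ^ (2 * n)) = c n * ((1 - t) * t ^ (2 * n) : ℝ) := fun t ↦ by
    push_cast
    ring
  simp only [hreal]
  rw [intervalIntegral.integral_const_mul, intervalIntegral.integral_ofReal,
    integral_one_sub_mul_pow]
  push_cast
  rw [show 2 * (n : ℂ) + 2 = 2 * (n + 1) by ring]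
  field_simp

lemma hasSum_riemannZeta_mul_pow_div_eq_integral_cot {z : ℂ} (hz₀ : z ≠ 0) (hz : ‖z‖ < 1) :
    HasSum (fun n : ℕ ↦ riemannZeta (2 * n) * z ^ (2 * n) / ((2 * n + 1) * (n + 1)))
      (-(π * z) * ∫ t in (0 : ℝ)..1, t * (1 - t) * Complex.cot (π * z * t)) := by
  have hcot : ∀ t ∈ Set.Ioc (0 : ℝ) 1,
      HasSum (fun n : ℕ ↦ riemannZeta (2 * n) * z ^ (2 * n) * (t : ℂ) ^ (2 * n))
        (-(π * z / 2) * (t * Complex.cot (π * z * t))) := fun t ht ↦ by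
    have hzt : ‖z * t‖ < 1 := by
      rw [norm_mul, Complex.norm_real, Real.norm_of_nonneg ht.1.le]
      exact (mul_le_of_le_one_right (norm_nonneg z) ht.2).trans_lt hz
    have ht₀ : (t : ℂ) ≠ 0 := Complex.ofReal_ne_zero.2 ht.1.ne'
    convert! hasSum_riemannZeta_two_mul_mul_pow (mul_ne_zero hz₀ ht₀) hzt using 1
    · ext n
      rw [mul_pow, mul_assoc]
    · rw [← mul_assoc (π : ℂ)]
      ring
  convert! hasSum_div_of_hasSum_mul_pow (hasSum_riemannZeta_two_mul_mul_pow hz₀ hz).summable hcot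
    using 1
  have hfactor (t : ℝ) : (1 - (t : ℂ)) * (-(π * z / 2) * (t * Complex.cot (π * z * t))) =
      -(π * z / 2) * (t * (1 - t) * Complex.cot (π * z * t)) := by ring
  simp only [hfactor]
  rw [intervalIntegral.integral_const_mul]
  ring

lemma cosZeta_add_cosZeta_add_half (a : ℝ) {s : ℂ} (hs : 1 < s.re) :
    cosZeta a s + cosZeta (a + 1 / 2 : ℝ) s = 2 ^ (1 - s) * cosZeta (2 * a : ℝ) s := by
  refine ((hasSum_nat_cosZeta a hs).add (hasSum_nat_cosZeta (a + 1 / 2) hs)).unique ?_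
  have hshift (n : ℕ) : cos (2 * π * (a + 1 / 2) * n) = (-1) ^ n * cos (2 * π * a * n) := by
    rw [← Real.cos_add_nat_mul_pi]
    ring_nf
  simp only [hshift]
  rw [← add_zero (2 ^ (1 - s) * _)]
  refine HasSum.even_add_odd ?_ ?_
  · convert! (hasSum_nat_cosZeta (2 * a) hs).mul_left (2 ^ (1 - s)) using 2 with n
    have hcos : cos (2 * π * a * (2 * n : ℕ)) = cos (2 * π * (2 * a) * n) := by
      push_cast
      ring_nf
    rw [hcos, (even_two_mul n).neg_one_pow, one_mul, Nat.cast_mul,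
      Complex.natCast_mul_natCast_cpow, Complex.cpow_sub _ _ two_ne_zero, Complex.cpow_one]
    push_cast
    ring
  · convert! hasSum_zero (α := ℂ) (β := ℕ) using 2 with n
    rw [(odd_two_mul_add_one n).neg_one_pow, neg_one_mul, Complex.ofReal_neg]
    ring

lemma cosZeta_half {s : ℂ} (hs : 1 < s.re) :
    cosZeta (1 / 2 : ℝ) s = (2 ^ (1 - s) - 1) * riemannZeta s := by
  have h := cosZeta_add_cosZeta_add_half 0 hs
  simp only [mul_zero, zero_add, AddCircle.coe_zero, cosZeta_zero] at h
  linear_combination h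

lemma cosZeta_quarter {s : ℂ} (hs : 1 < s.re) :
    cosZeta (1 / 4 : ℝ) s = 2 ^ (-s) * (2 ^ (1 - s) - 1) * riemannZeta s := by
  have h := cosZeta_add_cosZeta_add_half (1 / 4) hs
  have hreflect : ((1 / 4 + 1 / 2 : ℝ) : UnitAddCircle) = -(1 / 4 : ℝ) := by
    rw [show (1 / 4 + 1 / 2 : ℝ) = 1 + -(1 / 4) by norm_num, AddCircle.coe_add,
      AddCircle.coe_period, zero_add, AddCircle.coe_neg]
  have htwo : (2 : ℂ) ^ (1 - s) = 2 * 2 ^ (-s) := by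
    rw [sub_eq_add_neg, Complex.cpow_add _ _ two_ne_zero, Complex.cpow_one]
  rw [hreflect, cosZeta_neg, show (2 * (1 / 4) : ℝ) = 1 / 2 by norm_num, cosZeta_half hs] at h
  linear_combination h / 2 + (2 ^ (1 - s) - 1) * riemannZeta s / 2 * htwo

lemma sinZeta_quarter_two : sinZeta (1 / 4 : ℝ) 2 = catalanConst := by
  have hsin := hasSum_nat_sinZeta (1 / 4) (s := 2) (by norm_num)
  have heven (m : ℕ) : sin (2 * π * (1 / 4) * (2 * m : ℕ)) = 0 := by
    rw [← Real.sin_nat_mul_pi m]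
    push_cast
    ring_nf
  have hodd (m : ℕ) : sin (2 * π * (1 / 4) * (2 * m + 1 : ℕ)) = (-1) ^ m := by
    have hangle : 2 * π * (1 / 4) * (2 * m + 1 : ℕ) = π / 2 + m * π := by
      push_cast
      ring
    rw [hangle, Real.sin_add_nat_mul_pi, Real.sin_pi_div_two, mul_one]
  have hcatalan := (hsin.summable.comp_injective (i := fun m : ℕ ↦ 2 * m + 1)
    fun m n h ↦ by simpa using h).hasSum
  refine hsin.unique ?_
  rw [← zero_add (catalanConst : ℂ)]
  refine HasSum.even_add_odd ?_ ?_
  · simp only [heven, Complex.ofReal_zero, zero_div, hasSum_zero]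
  · convert! hcatalan
    simp only [catalanConst, Complex.ofReal_tsum, Function.comp_apply, hodd]
    push_cast
    simp only [Complex.cpow_ofNat]

lemma tendsto_integral_mul_cos {f : ℝ → ℝ} (hf : Integrable f) :
    Tendsto (fun w : ℝ ↦ ∫ x, f x * cos (w * x)) atTop (𝓝 0) := by
  have hexp := (Real.tendsto_integral_exp_smul_cocompact fun x ↦ (f x : ℂ)).comp
    ((tendsto_id.atTop_div_const two_pi_pos).mono_right atTop_le_cocompact)
  have hre := (Complex.continuous_re.tendsto 0).comp hexp
  rw [Complex.zero_re] at hre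
  refine hre.congr fun w ↦ ?_
  have hint : Integrable fun x : ℝ ↦ Real.fourierChar (-(x * (w / (2 * π)))) • (f x : ℂ) :=
    by simpa [mul_comm] using (Real.fourierIntegral_convergent_iff (w / (2 * π))).2 hf.ofReal
  simp only [Function.comp_apply, id_eq]
  rw [← RCLike.re_eq_complex_re, ← integral_re hint]
  congr with x
  rw [Circle.smul_def, Real.fourierChar_apply, smul_eq_mul, RCLike.re_eq_complex_re,
    Complex.re_mul_ofReal, Complex.exp_ofReal_mul_I_re, mul_comm,
    show 2 * π * -(x * (w / (2 * π))) = -(w * x) by field_simp, Real.cos_neg]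

lemma tendsto_intervalIntegral_mul_cos {f : ℝ → ℝ} {a b : ℝ}
    (hf : IntervalIntegrable f volume a b) :
    Tendsto (fun w : ℝ ↦ ∫ x in a..b, f x * cos (w * x)) atTop (𝓝 0) := by
  have h := (tendsto_integral_mul_cos
    ((intervalIntegrable_iff.1 hf).integrable_indicator measurableSet_uIoc)).const_smul
      (if a ≤ b then 1 else -1 : ℝ)
  rw [smul_zero] at h
  refine h.congr fun w ↦ ?_
  rw [intervalIntegral.intervalIntegral_eq_integral_uIoc,
    ← integral_indicator measurableSet_uIoc]
  simp only [Set.indicator_mul_left]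

lemma sum_range_two_mul_sin_half_mul_sin (x : ℝ) (N : ℕ) :
    ∑ k ∈ Finset.range N, 2 * sin (x / 2) * sin (k * x) =
      cos (x / 2) - cos ((N - 1 / 2) * x) := by
  have htele (k : ℕ) : 2 * sin (x / 2) * sin (k * x) =
      -cos (((k + 1 : ℕ) - 1 / 2) * x) - -cos ((k - 1 / 2) * x) := by
    rw [Real.two_mul_sin_mul_sin, ← Real.cos_neg (x / 2 - k * x)]
    push_cast
    ring_nf
  rw [Finset.sum_congr rfl fun k _ ↦ htele k,
    Finset.sum_range_sub fun k : ℕ ↦ -cos ((k - 1 / 2) * x), Nat.cast_zero,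
    show (0 - 1 / 2) * x = -(x / 2) by ring, Real.cos_neg]
  ring

lemma sin_nat_mul_eq_zero_of_sin_half_eq_zero {x : ℝ} (hx : sin (x / 2) = 0) (k : ℕ) :
    sin (k * x) = 0 := by
  obtain ⟨m, hm⟩ := Real.sin_eq_zero_iff.1 hx
  refine Real.sin_eq_zero_iff.2 ⟨k * (2 * m), ?_⟩
  push_cast
  linear_combination 2 * k * hm

-- Both sides vanish where `sin (x / 2) = 0`, by division by zero on the right.
lemma mul_sum_sin_eq_mul_cot_half_sub (c x : ℝ) (N : ℕ) :
    c * ∑ k ∈ Finset.range N, sin (k * x) =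
      (c * cot (x / 2) - c / sin (x / 2) * cos ((N - 1 / 2) * x)) / 2 := by
  rw [Real.cot_eq_cos_div_sin]
  by_cases hx : sin (x / 2) = 0
  · simp only [sin_nat_mul_eq_zero_of_sin_half_eq_zero hx, hx, Finset.sum_const_zero, div_zero,
      mul_zero, zero_mul, sub_zero, zero_div]
  · have hsum := sum_range_two_mul_sin_half_mul_sin x N
    rw [← Finset.mul_sum] at hsum
    generalize cos ((N - 1 / 2) * x) = C at hsum ⊢
    field_simp
    linear_combination c * hsum

theorem tendsto_sum_integral_mul_sin {g : ℝ → ℝ} {a b : ℝ}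
    (hg : IntervalIntegrable (fun x ↦ g x / sin (x / 2)) volume a b) :
    Tendsto (fun N ↦ ∑ k ∈ Finset.range N, ∫ x in a..b, g x * sin (k * x)) atTop
      (𝓝 ((∫ x in a..b, g x * cot (x / 2)) / 2)) := by
  have hcot : IntervalIntegrable (fun x ↦ g x * cot (x / 2)) volume a b := by
    simp only [Real.cot_eq_cos_div_sin, mul_div_left_comm _ (cos _), mul_comm (cos _)]
    exact hg.mul_continuousOn (by fun_prop)
  have hcos (N : ℕ) : IntervalIntegrable
      (fun x ↦ g x / sin (x / 2) * cos ((N - 1 / 2) * x)) volume a b :=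
    hg.mul_continuousOn (by fun_prop)
  have hsin (k : ℕ) : IntervalIntegrable (fun x ↦ g x * sin (k * x)) volume a b := by
    have hcancel (x : ℝ) :
        g x / sin (x / 2) * (sin (x / 2) * sin (k * x)) = g x * sin (k * x) := by
      by_cases hx : sin (x / 2) = 0
      · rw [sin_nat_mul_eq_zero_of_sin_half_eq_zero hx, mul_zero, mul_zero, mul_zero]
      · rw [← mul_assoc, div_mul_cancel₀ _ hx]
    simpa only [hcancel] using hg.mul_continuousOn
      (g := fun x ↦ sin (x / 2) * sin (k * x)) (by fun_prop)
  have hpartial (N : ℕ) : ∑ k ∈ Finset.range N, ∫ x in a..b, g x * sin (k * x) =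
      ((∫ x in a..b, g x * cot (x / 2)) -
        ∫ x in a..b, g x / sin (x / 2) * cos ((N - 1 / 2) * x)) / 2 := by
    rw [← intervalIntegral.integral_finsetSum fun k _ ↦ hsin k,
      ← intervalIntegral.integral_sub hcot (hcos N), ← intervalIntegral.integral_div]
    simp only [← Finset.mul_sum, mul_sum_sin_eq_mul_cot_half_sub]
  have hfreq : Tendsto (fun N : ℕ ↦ (N : ℝ) - 1 / 2) atTop atTop :=
    tendsto_atTop_add_const_right _ _ tendsto_natCast_atTop_atTop
  simpa only [hpartial, sub_zero, Function.comp_apply] using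
    (((tendsto_intervalIntegral_mul_cos hg).comp hfreq).const_sub _).div_const 2

lemma integral_mul_sub_mul_sin (θ k : ℝ) :
    ∫ x in (0 : ℝ)..θ, x * (θ - x) * sin (k * x) =
      2 * (1 / k ^ 3 - cos (k * θ) / k ^ 3) - θ * (sin (k * θ) / k ^ 2) := by
  rcases eq_or_ne k 0 with rfl | hk
  · simp
  have hderiv (x : ℝ) : HasDerivAt
      (fun x ↦ -(x * (θ - x)) * (cos (k * x) / k) + (θ - 2 * x) * (sin (k * x) / k ^ 2)
        - 2 * (cos (k * x) / k ^ 3)) (x * (θ - x) * sin (k * x)) x := by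
    have hkx : HasDerivAt (fun x ↦ k * x) k x := by simpa using (hasDerivAt_id x).const_mul k
    have hquad : HasDerivAt (fun x ↦ -(x * (θ - x))) (-(θ - 2 * x)) x := by
      convert! ((hasDerivAt_id x).mul ((hasDerivAt_id x).const_sub θ)).neg using 1
      simp only [id]
      ring
    have hlin : HasDerivAt (fun x ↦ θ - 2 * x) (-2) x := by
      simpa using ((hasDerivAt_id x).const_mul 2).const_sub θ
    convert! ((hquad.mul (hkx.cos.div_const k)).add (hlin.mul (hkx.sin.div_const (k ^ 2)))).sub
      ((hkx.cos.div_const (k ^ 3)).const_mul 2) using 1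
    field_simp
    ring
  rw [intervalIntegral.integral_eq_sub_of_hasDerivAt (fun x _ ↦ hderiv x)
    (Continuous.intervalIntegrable (by fun_prop) _ _)]
  simp only [mul_zero, Real.sin_zero, Real.cos_zero]
  ring

lemma intervalIntegrable_mul_sub_div_sin_half {θ : ℝ} (hθ₀ : 0 ≤ θ) (hθ : θ < 2 * π) :
    IntervalIntegrable (fun x ↦ x * (θ - x) / sin (x / 2)) volume 0 θ := by
  have hsin {x : ℝ} (hx₀ : 0 < x) (hx : x ≤ θ) : 0 < sin (x / 2) :=
    Real.sin_pos_of_pos_of_lt_pi (by linarith) (by linarith)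
  have hcont : ContinuousOn (fun x ↦ 2 * (θ - x) / sinc (x / 2)) (Set.uIcc 0 θ) := by
    refine ContinuousOn.div (by fun_prop)
      (Real.continuous_sinc.comp (continuous_id.div_const 2)).continuousOn fun x hx ↦ ?_
    rw [Set.uIcc_of_le hθ₀] at hx
    rcases hx.1.eq_or_lt with rfl | hx₀
    · simp
    · rw [Real.sinc_of_ne_zero (by positivity)]
      exact (div_pos (hsin hx₀ hx.2) (by positivity)).ne'
  refine hcont.intervalIntegrable.congr fun x hx ↦ ?_
  rw [Set.uIoc_of_le hθ₀] at hx
  have hx₀ : x ≠ 0 := hx.1.ne'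
  have hsin₀ := (hsin hx.1 hx.2).ne'
  simp only [Real.sinc_of_ne_zero (div_ne_zero hx₀ two_ne_zero)]
  field_simp

lemma hasSum_integral_mul_sub_mul_sin (r : ℝ) :
    HasSum (fun k : ℕ ↦ ((∫ x in (0 : ℝ)..2 * π * r, x * (2 * π * r - x) * sin (k * x) : ℝ) : ℂ))
      (2 * (riemannZeta 3 - cosZeta r 3) - 2 * π * r * sinZeta r 2) := by
  have hzeta : HasSum (fun k : ℕ ↦ 1 / (k : ℂ) ^ 3) (riemannZeta 3) := by
    simpa [cosZeta_zero] using hasSum_nat_cosZeta 0 (s := 3) (by norm_num)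
  have hcos := hasSum_nat_cosZeta r (s := 3) (by norm_num)
  have hsin := hasSum_nat_sinZeta r (s := 2) (by norm_num)
  convert! ((hzeta.sub hcos).mul_left 2).sub (hsin.mul_left (2 * π * r : ℂ)) using 2 with k
  rw [integral_mul_sub_mul_sin, mul_comm (k : ℝ)]
  simp only [Complex.cpow_ofNat]
  push_cast
  ring

lemma integral_mul_sub_mul_cot_half {r : ℝ} (hr₀ : 0 ≤ r) (hr : r < 1) :
    ((∫ x in (0 : ℝ)..2 * π * r, x * (2 * π * r - x) * cot (x / 2) : ℝ) : ℂ) =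
      4 * (riemannZeta 3 - cosZeta r 3) - 4 * π * r * sinZeta r 2 := by
  have hint := intervalIntegrable_mul_sub_div_sin_half (θ := 2 * π * r) (by positivity)
    (mul_lt_of_lt_one_right two_pi_pos hr)
  have hlim := (Complex.continuous_ofReal.tendsto _).comp (tendsto_sum_integral_mul_sin hint)
  simp only [Function.comp_def, Complex.ofReal_sum] at hlim
  have h := tendsto_nhds_unique hlim (hasSum_integral_mul_sub_mul_sin r).tendsto_sum_nat
  push_cast at h ⊢
  linear_combination 2 * h

lemma integral_mul_one_sub_mul_cot (θ : ℝ) :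
    θ ^ 3 * ∫ t in (0 : ℝ)..1, t * (1 - t) * cot (θ * t / 2) =
      ∫ x in (0 : ℝ)..θ, x * (θ - x) * cot (x / 2) := by
  have h := intervalIntegral.smul_integral_comp_mul_left (a := 0) (b := 1)
    (fun x ↦ x * (θ - x) * cot (x / 2)) θ
  rw [mul_zero, mul_one] at h
  rw [← h, pow_succ', mul_assoc, ← intervalIntegral.integral_const_mul, smul_eq_mul]
  congr 2 with t
  ring

theorem hasSum_riemannZeta_mul_pow_div_eq_clausen {r : ℝ} (hr₀ : 0 < r) (hr : r < 1) :
    HasSum (fun n : ℕ ↦ riemannZeta (2 * n) * r ^ (2 * n) / ((2 * n + 1) * (n + 1)))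
      (sinZeta r 2 / (2 * π * r) - 2 * (riemannZeta 3 - cosZeta r 3) / (2 * π * r) ^ 2) := by
  have hr' : (r : ℂ) ≠ 0 := Complex.ofReal_ne_zero.2 hr₀.ne'
  have hnorm : ‖(r : ℂ)‖ < 1 := by rwa [Complex.norm_real, Real.norm_of_nonneg hr₀.le]
  convert! hasSum_riemannZeta_mul_pow_div_eq_integral_cot hr' hnorm using 1
  have hreal (t : ℝ) : (t : ℂ) * (1 - t) * Complex.cot (π * r * t) =
      (t * (1 - t) * cot (2 * π * r * t / 2) : ℝ) := by
    rw [show 2 * π * r * t / 2 = π * r * t by ring]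
    push_cast
    rfl
  simp only [hreal]
  rw [intervalIntegral.integral_ofReal]
  have hval := integral_mul_sub_mul_cot_half hr₀.le hr
  rw [← integral_mul_one_sub_mul_cot, Complex.ofReal_mul] at hval
  have hπ : (π : ℂ) ≠ 0 := Complex.ofReal_ne_zero.2 pi_ne_zero
  generalize (∫ t in (0 : ℝ)..1, t * (1 - t) * cot (2 * π * r * t / 2)) = I at hval ⊢
  push_cast at hval ⊢
  field_simp
  linear_combination hval / 4

theorem stmt14 :
    ∑' n : ℕ, riemannZeta (2 * n) / ((2 * n + 1) * (n + 1) * 16 ^ n) =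
      2 * (catalanConst : ℂ) / (π : ℂ) - 35 * riemannZeta 3 / (4 * (π : ℂ) ^ 2) := by
  have hsum := hasSum_riemannZeta_mul_pow_div_eq_clausen (r := 1 / 4) (by norm_num) (by norm_num)
  have hterm (n : ℕ) :
      riemannZeta (2 * n) * ((1 / 4 : ℝ) : ℂ) ^ (2 * n) / ((2 * n + 1) * (n + 1)) =
        riemannZeta (2 * n) / ((2 * n + 1) * (n + 1) * 16 ^ n) := by
    rw [pow_mul, show ((1 / 4 : ℝ) : ℂ) ^ 2 = 1 / 16 by norm_num, div_pow, one_pow]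
    field_simp
  have hcos : cosZeta (1 / 4 : ℝ) 3 = -3 / 32 * riemannZeta 3 := by
    rw [cosZeta_quarter (by norm_num), show (1 - 3 : ℂ) = -2 by norm_num, Complex.cpow_neg,
      Complex.cpow_neg, Complex.cpow_ofNat, Complex.cpow_ofNat]
    norm_num
  simp only [hterm] at hsum
  rw [hsum.tsum_eq, sinZeta_quarter_two, hcos]
  push_cast
  field_simp
  ring
end
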